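/- Let p be a prime, Δ a finite abelian p-group, and Λ = ℤ_p[Δ] the group algebra of Δ over the p-adic integers. Let M be a Λ-module that is finitely generated and free as a ℤ_p-module, and suppose there exists a surjective Λ-linear map Λ^n ↠ M. If for every prime ideal Q of Λ with p ∉ Q the module (M/QM) ⊗_{ℤ_p} ℚ_p is free of rank n over the ring (Λ/Q) ⊗_{ℤ_p} ℚ_p, then M is a free Λ-module of rank n. -/

import Mathlib

open TensorProduct
set_option synthInstance.maxHeartbeats 1000000
set_option maxHeartbeats 2000000

open MonoidAlgebra in
/-- The group algebra of a finite commutative group over a domain of characteristic zero is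
reduced. -/
theorem MonoidAlgebra.isReduced_of_charZero (R G : Type*) [CommRing R] [IsDomain R] [CharZero R]
    [CommGroup G] [Finite G] : IsReduced (MonoidAlgebra R G) := by
  have : CharZero (FractionRing R) :=
    charZero_of_injective_algebraMap (IsFractionRing.injective R (FractionRing R))
  have : NeZero (Nat.card G : FractionRing R) := ⟨Nat.cast_ne_zero.mpr Nat.card_pos.ne'⟩
  refine isReduced_of_injective (mapRingHom G (algebraMap R (FractionRing R))) fun x y hxy ↦ ?_
  ext g
  apply IsFractionRing.injective R (FractionRing R)
  simpa using congr(($hxy).coeff g)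

/-- In a reduced ring, an element lying in every prime ideal that does not contain a fixed
regular element vanishes. -/
theorem eq_zero_of_forall_mem_isPrime_of_notMem {R : Type*} [CommRing R] [IsReduced R] {r a : R}
    (hr : r ∈ nonZeroDivisors R) (ha : ∀ Q : Ideal R, Q.IsPrime → r ∉ Q → a ∈ Q) : a = 0 := by
  have h : IsNilpotent (a * r) := nilpotent_iff_mem_prime.mpr fun Q hQ ↦ by
    by_cases hrQ : r ∈ Q
    · exact Q.mul_mem_left a hrQ
    · exact Q.mul_mem_right r (ha Q hQ hrQ)
  exact (mul_right_mem_nonZeroDivisors_eq_zero_iff hr).mp h.eq_zero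

/-- If `R ^ n → M` is surjective and the base change of `M / QM` to an `R / Q`-algebra `S` is free
of rank `n`, then the coordinates of each element of the kernel vanish in `S`. -/
theorem algebraMap_mk_eq_zero_of_surjective {R M S : Type*} [CommRing R] [AddCommGroup M]
    [Module R M] {n : ℕ} (f : (Fin n → R) →ₗ[R] M) (hf : Function.Surjective f) (Q : Ideal R)
    [CommRing S] [Nontrivial S] [Algebra (R ⧸ Q) S]
    [Module.Free S (S ⊗[R ⧸ Q] (M ⧸ (Q • ⊤ : Submodule R M)))]
    (hrank : Module.finrank S (S ⊗[R ⧸ Q] (M ⧸ (Q • ⊤ : Submodule R M))) = n)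
    {x : Fin n → R} (hx : f x = 0) (i : Fin n) :
    algebraMap (R ⧸ Q) S (Ideal.Quotient.mk Q (x i)) = 0 := by
  let g : (Fin n → S) →ₗ[S] S ⊗[R ⧸ Q] (M ⧸ (Q • ⊤ : Submodule R M)) :=
    Fintype.linearCombination S fun j ↦
      1 ⊗ₜ Submodule.Quotient.mk (p := (Q • ⊤ : Submodule R M)) (f (Pi.single j 1))
  have hg (s : S) (y : Fin n → R) :
      g (fun j ↦ s * algebraMap (R ⧸ Q) S (Ideal.Quotient.mk Q (y j))) =
        s ⊗ₜ Submodule.Quotient.mk (f y) := by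
    have hy : f y = ∑ j, y j • f (Pi.single j 1) := by
      conv_lhs => rw [pi_eq_sum_univ' y]
      simp [Pi.single, map_sum]
    rw [hy, ← Submodule.mkQ_apply, map_sum, TensorProduct.tmul_sum]
    simp only [g, Fintype.linearCombination_apply]
    refine Finset.sum_congr rfl fun j _ ↦ ?_
    rw [TensorProduct.smul_tmul', smul_eq_mul, mul_one, mul_comm, ← Algebra.smul_def,
      TensorProduct.smul_tmul]
    rfl
  have hsurj : Function.Surjective g := by
    rw [← LinearMap.range_eq_top, eq_top_iff]
    rintro z -
    induction z with
    | zero => exact zero_mem _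
    | add a b ha hb => exact add_mem ha hb
    | tmul s m =>
      obtain ⟨m, rfl⟩ := Submodule.Quotient.mk_surjective _ m
      obtain ⟨y, rfl⟩ := hf m
      exact ⟨_, hg s y⟩
  have : Module.Finite S (S ⊗[R ⧸ Q] (M ⧸ (Q • ⊤ : Submodule R M))) := .of_surjective g hsurj
  let e : (S ⊗[R ⧸ Q] (M ⧸ (Q • ⊤ : Submodule R M))) ≃ₗ[S] (Fin n → S) :=
    (Module.finBasisOfFinrankEq S _ hrank).equivFun
  have hinj : Function.Injective (e.toLinearMap ∘ₗ g) :=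
    OrzechProperty.injective_of_surjective_endomorphism _ (e.surjective.comp hsurj)
  have h := hinj (a₁ := fun j ↦ 1 * algebraMap (R ⧸ Q) S (Ideal.Quotient.mk Q (x j))) (a₂ := 0)
    (by rw [LinearMap.comp_apply, hg, hx]; simp)
  simpa using congrFun h i

/-- A domain over `ℤ_[p]` in which `p` is nonzero embeds into its base change to `ℚ_[p]`. -/
theorem PadicInt.includeLeft_injective_of_ne_zero (p : ℕ) [Fact p.Prime] (A : Type*) [CommRing A]
    [IsDomain A] [Algebra ℤ_[p] A] (hp : (p : A) ≠ 0) :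
    Function.Injective (algebraMap A (A ⊗[ℤ_[p]] ℚ_[p])) := by
  have hinj : Function.Injective (algebraMap ℤ_[p] A) := by
    refine (injective_iff_map_eq_zero _).mpr fun x hx ↦ by_contra fun hx0 ↦ hp ?_
    rw [PadicInt.unitCoeff_spec hx0, map_mul, map_pow, map_natCast] at hx
    exact eq_zero_of_pow_eq_zero
      ((((PadicInt.unitCoeff hx0).isUnit.map (algebraMap ℤ_[p] A)).mul_right_eq_zero).mp hx)
  have : FaithfulSMul ℤ_[p] A := (faithfulSMul_iff_algebraMap_injective _ _).mpr hinj
  have : Module.IsTorsionFree ℤ_[p] A := inferInstance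
  exact Algebra.TensorProduct.includeLeft_injective (S := A)
    (IsFractionRing.injective ℤ_[p] ℚ_[p])

/-- Let `Λ = ℤ_p[Δ]` for a finite abelian `p`-group `Δ`, and let `M` be a
`Λ`-module, finitely generated and free over `ℤ_p`, admitting a `Λ`-linear surjection
`Λ^n ↠ M`.  If for every prime ideal `Q` of `Λ` with `p ∉ Q` the module
`(M/QM) ⊗_{ℤ_p} ℚ_p` (realized as the base change of `M/QM` to `(Λ/Q) ⊗_{ℤ_p} ℚ_p`)
is free of rank `n` over `(Λ/Q) ⊗_{ℤ_p} ℚ_p`, then `M` is a free `Λ`-module of rank `n`. -/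
theorem free_of_generic_fibers_free (p : ℕ) [Fact p.Prime]
    (Δ : Type*) [CommGroup Δ] [Finite Δ] (hΔ : IsPGroup p Δ)
    (M : Type*) [AddCommGroup M] [Module (MonoidAlgebra ℤ_[p] Δ) M]
    [Module ℤ_[p] M] [IsScalarTower ℤ_[p] (MonoidAlgebra ℤ_[p] Δ) M]
    [Module.Finite ℤ_[p] M] [Module.Free ℤ_[p] M] (n : ℕ)
    (f : (Fin n → MonoidAlgebra ℤ_[p] Δ) →ₗ[MonoidAlgebra ℤ_[p] Δ] M)
    (hf : Function.Surjective f)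
    (hfree : ∀ Q : Ideal (MonoidAlgebra ℤ_[p] Δ), Q.IsPrime →
      (p : MonoidAlgebra ℤ_[p] Δ) ∉ Q →
      Module.Free ((MonoidAlgebra ℤ_[p] Δ ⧸ Q) ⊗[ℤ_[p]] ℚ_[p])
        (((MonoidAlgebra ℤ_[p] Δ ⧸ Q) ⊗[ℤ_[p]] ℚ_[p]) ⊗[MonoidAlgebra ℤ_[p] Δ ⧸ Q]
          (M ⧸ (Q • ⊤ : Submodule (MonoidAlgebra ℤ_[p] Δ) M))) ∧
      Module.finrank ((MonoidAlgebra ℤ_[p] Δ ⧸ Q) ⊗[ℤ_[p]] ℚ_[p])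
        (((MonoidAlgebra ℤ_[p] Δ ⧸ Q) ⊗[ℤ_[p]] ℚ_[p]) ⊗[MonoidAlgebra ℤ_[p] Δ ⧸ Q]
          (M ⧸ (Q • ⊤ : Submodule (MonoidAlgebra ℤ_[p] Δ) M))) = n) :
    Nonempty (M ≃ₗ[MonoidAlgebra ℤ_[p] Δ] (Fin n → MonoidAlgebra ℤ_[p] Δ)) := by
  have := MonoidAlgebra.isReduced_of_charZero ℤ_[p] Δ
  have hp : (p : MonoidAlgebra ℤ_[p] Δ) ∈ nonZeroDivisors (MonoidAlgebra ℤ_[p] Δ) := by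
    refine mem_nonZeroDivisors_iff_right.mpr fun a ha ↦ ?_
    rw [mul_comm, ← nsmul_eq_mul] at ha
    ext g
    have h := congr(($ha).coeff g)
    rw [MonoidAlgebra.coeff_smul, Finsupp.smul_apply] at h
    exact (smul_eq_zero.mp h).resolve_left (Fact.out : p.Prime).ne_zero
  have hinj : Function.Injective f := by
    refine (injective_iff_map_eq_zero f).mpr fun x hx ↦ funext fun i ↦ ?_
    refine eq_zero_of_forall_mem_isPrime_of_notMem hp fun Q hQ hpQ ↦ ?_
    have hS := PadicInt.includeLeft_injective_of_ne_zero p (MonoidAlgebra ℤ_[p] Δ ⧸ Q)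
      fun h ↦ hpQ (Ideal.Quotient.eq_zero_iff_mem.mp (by simpa using h))
    have := hS.nontrivial
    obtain ⟨hfreeQ, hrank⟩ := hfree Q hQ hpQ
    have h := algebraMap_mk_eq_zero_of_surjective f hf Q hrank hx i
    exact Ideal.Quotient.eq_zero_iff_mem.mp (hS (h.trans (map_zero _).symm))
  exact ⟨(LinearEquiv.ofBijective f ⟨hinj, hf⟩).symm⟩
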